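/- arXiv:2508.20879 — 2 statements merged into one kernel-verified Lean document; each statement's English description precedes it below -/
import Mathlib

section
/- For every integer n > 0, there exists a generalized de Bruijn word u of length 3n over Σ_3 with completely unclustered BWT such that w = BWT(u) satisfies w_{3n−3} = 2; likewise, there exists one such that w_{3n−2} = 2. -/
/-!
A word `w` of length `3 * n` in which every block of three letters is a permutation of the alphabet
has standard permutation `π x = n * w x + x / 3`. Such words therefore correspond to the
permutations `π` of `Fin (3 * n)` with `π x % n = x / 3` (`IsBlockPerm`), the word being
recovered as `w x = π x / n` (`letter`). If `π` has a single orbit, then listing `0` and its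
successive preimages `π⁻ʲ 0` and reading off the letters `⌊π⁻ʲ 0 / n⌋` gives a word `u` with
`bwt u = w` (`exists_bwt_eq`): rows of the sorted matrix of rotations are indexed by points `x`, the
row of `x` reads `⌊π⁻ⁱ x / n⌋`, `i = 0, 1, …`, and `π⁻¹` preserves order between points with
the same first letter.

Everything else is about choosing `π`. Multiplying by a transposition of two points in different
orbits merges the orbits (`sameCycle_mul_swap`). Since all points with equal value of `x / 3` can
be exchanged freely, a block permutation whose orbit of `0` is as large as possible has a single
orbit (`exists_transitive`).

Given a single orbit and three points of one block, one of the two nontrivial cyclic shifts of the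
values on that block again yields a single orbit (`transitive_or`); both shifts change the letter at
all three positions. So, a block ending in the first letter of the next block can be modified to
remove this coincidence, without affecting anything to its right. Doing this from right to left
makes the word unclustered while leaving the last block alone (`exists_no_ties`). Finally, the last
letter cannot be `2`, because `3 * n - 1` would then be a fixed point of `π`; so `2` stands at one
of the other two positions of the last block, and shifting that block moves it to the other one.
-/

/-- The cyclic rotation of the word `w` of length `n` starting at position `j`. -/
def rotl {n k : ℕ} (w : Fin n → Fin k) (j : Fin n) : Fin n → Fin k :=
  fun i => w (i + j)

/-- Lexicographic order on words of the same length. -/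
def LexLe {n k : ℕ} (f g : Fin n → Fin k) : Prop :=
  f = g ∨ ∃ i : Fin n, (∀ j : Fin n, j < i → f j = g j) ∧ f i < g i

instance {n k : ℕ} (f g : Fin n → Fin k) : Decidable (LexLe f g) := by
  unfold LexLe; infer_instance

/-- The starting positions of the `n` cyclic rotations of `w`, listed so that the
corresponding rotations are in ascending lexicographic order (with multiplicity). -/
def sortedRot {n k : ℕ} (w : Fin n → Fin k) : List (Fin n) :=
  (List.finRange n).mergeSort fun a b => decide (LexLe (rotl w a) (rotl w b))

lemma length_sortedRot {n k : ℕ} (w : Fin n → Fin k) : (sortedRot w).length = n := by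
  simp [sortedRot, List.length_mergeSort, List.length_finRange]

/-- The Burrows–Wheeler transform of (the necklace of) `w`: the `m`-th letter is the
last letter of the `m`-th cyclic rotation of `w` in ascending lexicographic order.
The last letter of the rotation starting at `j` is `w ((j + n - 1) % n)`. -/
def bwt {n k : ℕ} (w : Fin n → Fin k) : Fin n → Fin k :=
  fun m =>
    let j : Fin n := (sortedRot w)[m.val]'(by rw [length_sortedRot]; exact m.isLt)
    w ⟨(j.val + (n - 1)) % n, Nat.mod_lt _ m.pos⟩

/-- A word is completely unclustered if no two consecutive letters are equal. -/
def Unclustered {n k : ℕ} (v : Fin n → Fin k) : Prop :=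
  ∀ (i : ℕ) (h : i + 1 < n), v ⟨i, Nat.lt_of_succ_lt h⟩ ≠ v ⟨i + 1, h⟩

/-- The position `k * b + i` inside a word of length `k * n`, i.e. position `i` of block `b`. -/
def blockIdx {k n : ℕ} (b : Fin n) (i : Fin k) : Fin (k * n) :=
  ⟨k * b.val + i.val, by
    have hb : b.val + 1 ≤ n := b.isLt
    have hi : i.val < k := i.isLt
    have h1 : k * (b.val + 1) ≤ k * n := Nat.mul_le_mul_left k hb
    have h2 : k * (b.val + 1) = k * b.val + k := by ring
    omega⟩

/-- A word of length `k * n` is an alphabet-permutation power if each of its `n`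
consecutive blocks of length `k` contains every letter of the alphabet. -/
def IsAlphaPermPower {k n : ℕ} (v : Fin (k * n) → Fin k) : Prop :=
  ∀ b : Fin n, Function.Surjective fun i : Fin k => v (blockIdx b i)

/-- An alphabet-permutation power `v` of length `k * n` has a tie at block `i`
if `v (k*i + k - 1) = v (k*(i+1))`. -/
def TieAt {k n : ℕ} (v : Fin (k * n) → Fin k) (i : ℕ) : Prop :=
  ∃ (h1 : k * i + (k - 1) < k * n) (h2 : k * (i + 1) < k * n),
    v ⟨k * i + (k - 1), h1⟩ = v ⟨k * (i + 1), h2⟩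

/-- `π` is the standard permutation of the word `w`. -/
def IsStdPerm {n k : ℕ} (w : Fin n → Fin k) (π : Equiv.Perm (Fin n)) : Prop :=
  ∀ i j : Fin n, π i < π j ↔ (w i < w j ∨ (w i = w j ∧ i < j))

/-- A word is primitive iff it is fixed by no nontrivial cyclic rotation
(equivalently, it is not a proper power). -/
def IsPrimitiveWord {n k : ℕ} (w : Fin n → Fin k) : Prop :=
  ∀ j : Fin n, rotl w j = w → j.val = 0

/-- The circular factor of length `n` of `w` starting at position `p`. -/
def circFactor {N k : ℕ} (w : Fin N → Fin k) (p : Fin N) (n : ℕ) : Fin n → Fin k :=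
  fun t => w ⟨(p.val + t.val) % N, Nat.mod_lt _ p.pos⟩

/-- A de Bruijn word of order `n` over `Σ_k`: every word of length `n` occurs
exactly once as a circular factor. -/
def IsDeBruijn (k n : ℕ) (w : Fin (k ^ n) → Fin k) : Prop :=
  ∀ f : Fin n → Fin k, ∃! p : Fin (k ^ n), circFactor w p n = f

/-- Cyclic successor of an index. -/
def nextIdx {N : ℕ} (i : Fin N) : Fin N := ⟨(i.val + 1) % N, Nat.mod_lt _ i.pos⟩

/-- A Hamiltonian cycle of the graph on `V` with edge set `E`, given as a cyclic
arrangement of all vertices. -/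
def IsHamCycle {V : Type*} [Fintype V] (E : Set (V × V))
    (γ : Fin (Fintype.card V) → V) : Prop :=
  Function.Bijective γ ∧ ∀ i, (γ i, γ (nextIdx i)) ∈ E

/-- The Hamiltonian cycle `γ` visits the edge `e`. -/
def Visits {V : Type*} [Fintype V] (γ : Fin (Fintype.card V) → V) (e : V × V) : Prop :=
  ∃ i, γ i = e.1 ∧ γ (nextIdx i) = e.2

/-! ### Orbits and transpositions -/

section Orbits

open Equiv Equiv.Perm

variable {α : Type*} [Fintype α] [DecidableEq α]

/-- The permutation `π` has a single orbit. -/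
def IsTransitive (π : Perm α) : Prop := ∀ x y, SameCycle π x y

omit [DecidableEq α] in
lemma mem_of_sameCycle {π : Perm α} {S : Set α} (hS : ∀ x ∈ S, π x ∈ S) {x y : α}
    (h : SameCycle π x y) (hx : x ∈ S) : y ∈ S := by
  obtain ⟨i, -, rfl⟩ := h.exists_pow_eq'
  clear h
  induction i with
  | zero => simpa using hx
  | succ k ih => rw [pow_succ', Perm.mul_apply]; exact hS _ ih

/-- If `a` and `b` lie in one orbit of `π * swap a b`, then the orbits of `π * swap a b` are unions
of orbits of `π`. -/
lemma SameCycle.of_mul_swap {π : Perm α} {a b : α} (hab : SameCycle (π * swap a b) a b) {x y : α}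
    (h : SameCycle π x y) : SameCycle (π * swap a b) x y := by
  refine mem_of_sameCycle (S := {y | SameCycle (π * swap a b) x y}) ?_ h (SameCycle.refl _ _)
  intro z hz
  have key : ∀ z, SameCycle (π * swap a b) z (π z) := by
    intro z
    by_cases hza : z = a
    · subst hza
      have : π z = (π * swap z b) b := by simp
      rw [this]; exact hab.trans (sameCycle_apply_right.2 (SameCycle.refl _ _))
    by_cases hzb : z = b
    · subst hzb
      have : π z = (π * swap a z) a := by simp
      rw [this]; exact hab.symm.trans (sameCycle_apply_right.2 (SameCycle.refl _ _))
    have : π z = (π * swap a b) z := by simp [swap_apply_of_ne_of_ne hza hzb]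
    rw [this]; exact sameCycle_apply_right.2 (SameCycle.refl _ _)
  exact SameCycle.trans hz (key z)

/-- Multiplying by a transposition of points in different orbits merges the two orbits. -/
lemma sameCycle_mul_swap {π : Perm α} {a b : α} (hab : ¬ SameCycle π a b) :
    SameCycle (π * swap a b) a b := by
  by_contra hcon
  have e1 : (π * swap a b) b = π a := by simp
  -- The part of the `π`-orbit of `a` outside the new orbit of `a` would be `π`-stable,
  -- and it contains `π a` but not `a`.
  have := mem_of_sameCycle (π := π)
    (S := {x | SameCycle π a x ∧ ¬ SameCycle (π * swap a b) a x}) (x := π a) (y := a) ?_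
    (sameCycle_apply_left.2 (SameCycle.refl _ _)) ?_
  · exact this.2 (SameCycle.refl _ _)
  · rintro x ⟨h1, h2⟩
    refine ⟨sameCycle_apply_right.2 h1, ?_⟩
    have hxa : x ≠ a := by rintro rfl; exact h2 (SameCycle.refl _ _)
    have hxb : x ≠ b := by rintro rfl; exact hab h1
    have : π x = (π * swap a b) x := by simp [swap_apply_of_ne_of_ne hxa hxb]
    rw [this, sameCycle_apply_right]; exact h2
  · refine ⟨sameCycle_apply_right.2 (SameCycle.refl _ _), ?_⟩
    rw [← e1, sameCycle_apply_right]; exact hcon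

omit [DecidableEq α] [Fintype α] in
lemma IsTransitive.isCycleOn {π : Perm α} (h : IsTransitive π) : π.IsCycleOn Set.univ :=
  ⟨π.bijective.bijOn_univ, fun x _ y _ => h x y⟩

omit [DecidableEq α] [Fintype α] in
lemma IsTransitive.apply_ne {π : Perm α} (h : IsTransitive π) {a b : α} (hab : a ≠ b) (x : α) :
    π x ≠ x := by
  intro hx
  have key : ∀ y, x = y := fun y => (h x y).eq_of_left hx
  exact hab ((key a).symm.trans (key b))

lemma IsTransitive.sign_eq {π : Perm α} (h : IsTransitive π) {a b : α} (hab : a ≠ b) :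
    sign π = -(-1) ^ Fintype.card α := by
  have hc : π.IsCycle := ⟨a, h.apply_ne hab a, fun y _ => h a y⟩
  have hs : π.support = Finset.univ := by
    ext x; simpa using h.apply_ne hab x
  rw [hc.sign, hs, Finset.card_univ]

/-- Multiplying a transitive permutation by a transposition separates the two points, since two
transitive permutations have the same sign. -/
lemma IsTransitive.not_sameCycle_mul_swap {π : Perm α} (h : IsTransitive π) {a b : α}
    (hab : a ≠ b) : ¬ SameCycle (π * swap a b) a b := by
  intro hc
  have h' : IsTransitive (π * swap a b) := fun x y => SameCycle.of_mul_swap hc (h x y)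
  have e := h'.sign_eq hab
  rw [Perm.sign_mul, h.sign_eq hab, sign_swap hab] at e
  rcases Int.units_eq_one_or (-(-1) ^ Fintype.card α) with h1 | h1 <;> rw [h1] at e <;>
    exact absurd e (by decide)

lemma IsTransitive.sameCycle_mul_swap_or {π : Perm α} (h : IsTransitive π) (a b x : α) :
    SameCycle (π * swap a b) a x ∨ SameCycle (π * swap a b) b x := by
  refine mem_of_sameCycle (π := π)
    (S := {x | SameCycle (π * swap a b) a x ∨ SameCycle (π * swap a b) b x}) ?_ (h a x)
    (Or.inl (SameCycle.refl _ _))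
  intro x hx
  by_cases hxa : x = a
  · subst hxa
    have : π x = (π * swap x b) b := by simp
    right; rw [this]; exact sameCycle_apply_right.2 (SameCycle.refl _ _)
  by_cases hxb : x = b
  · subst hxb
    have : π x = (π * swap a x) a := by simp
    left; rw [this]; exact sameCycle_apply_right.2 (SameCycle.refl _ _)
  have : π x = (π * swap a b) x := by simp [swap_apply_of_ne_of_ne hxa hxb]
  rw [Set.mem_ofPred_eq, this, sameCycle_apply_right, sameCycle_apply_right]
  exact hx

/-- The two products with transpositions here are the two ways of multiplying `π` on the right by a
`3`-cycle on `{a, b, c}`: the first transposition splits the orbit in two, and `c` is separated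
from one of `a` and `b`, with which it can be exchanged to merge the two parts again. -/
lemma IsTransitive.transitive_or {π : Perm α} (h : IsTransitive π) {a b : α} (c : α)
    (hab : a ≠ b) :
    IsTransitive (π * swap a b * swap a c) ∨ IsTransitive (π * swap a b * swap b c) := by
  have hor := h.sameCycle_mul_swap_or a b
  have hn := h.not_sameCycle_mul_swap hab
  by_cases hac : SameCycle (π * swap a b) a c
  · right
    have hbc : ¬ SameCycle (π * swap a b) b c := fun hbc => hn (hac.trans hbc.symm)
    have hm := sameCycle_mul_swap hbc
    have key : ∀ x, SameCycle (π * swap a b * swap b c) b x := by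
      intro x
      rcases hor x with hx | hx
      · exact hm.trans (SameCycle.of_mul_swap hm (hac.symm.trans hx))
      · exact SameCycle.of_mul_swap hm hx
    exact fun x y => (key x).symm.trans (key y)
  · left
    have hm := sameCycle_mul_swap hac
    have hbc := (hor c).resolve_left hac
    have key : ∀ x, SameCycle (π * swap a b * swap a c) a x := by
      intro x
      rcases hor x with hx | hx
      · exact SameCycle.of_mul_swap hm hx
      · exact hm.trans (SameCycle.of_mul_swap hm (hbc.symm.trans hx))
    exact fun x y => (key x).symm.trans (key y)

end Orbits

/-! ### Block permutations -/

section Blocks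

open Equiv Equiv.Perm

variable {n : ℕ}

/-- `π` is of the form `x ↦ n * w x + x / 3` for a word `w` (then necessarily an
alphabet-permutation power, with standard permutation `π`). -/
def IsBlockPerm (π : Perm (Fin (3 * n))) : Prop := ∀ x, (π x).val % n = x.val / 3

/-- The word whose standard permutation is the block permutation `π`. -/
def letter (π : Perm (Fin (3 * n))) (x : Fin (3 * n)) : Fin 3 :=
  ⟨(π x).val / n, Nat.div_lt_of_lt_mul (by have := (π x).isLt; omega)⟩

lemma IsBlockPerm.mul_swap {π : Perm (Fin (3 * n))} (h : IsBlockPerm π) {a b : Fin (3 * n)}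
    (hab : a.val / 3 = b.val / 3) : IsBlockPerm (π * swap a b) := by
  intro x
  rw [Perm.mul_apply, h]
  by_cases hxa : x = a
  · subst hxa; simp [hab]
  by_cases hxb : x = b
  · subst hxb; simp [hab]
  rw [swap_apply_of_ne_of_ne hxa hxb]

/-- The letter and the block together determine the image. -/
lemma apply_eq_of_letter_eq {π ρ : Perm (Fin (3 * n))} (hπ : IsBlockPerm π) (hρ : IsBlockPerm ρ)
    {x y : Fin (3 * n)} (hxy : x.val / 3 = y.val / 3) (h : letter π x = letter ρ y) :
    π x = ρ y := by
  have h1 : (π x).val / n = (ρ y).val / n := congrArg Fin.val h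
  have h2 : (π x).val % n = (ρ y).val % n := by rw [hπ, hρ, hxy]
  ext
  rw [← Nat.div_add_mod (π x).val n, ← Nat.div_add_mod (ρ y).val n, h1, h2]

lemma isAlphaPermPower_letter (π : Perm (Fin (3 * n))) (h : IsBlockPerm π) :
    IsAlphaPermPower (letter π) := by
  intro b a
  have hb := b.isLt
  have ha := a.isLt
  have hlt : n * a.val + b.val < 3 * n := by
    have : n * (a.val + 1) ≤ n * 3 := Nat.mul_le_mul_left n ha
    rw [mul_add] at this; omega
  obtain ⟨x, hx⟩ := π.surjective ⟨n * a.val + b.val, hlt⟩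
  have h1 := h x
  rw [hx] at h1
  simp only [Nat.mul_add_mod, Nat.mod_eq_of_lt hb] at h1
  refine ⟨⟨x.val % 3, Nat.mod_lt _ (by norm_num)⟩, ?_⟩
  have hxe : blockIdx b ⟨x.val % 3, Nat.mod_lt _ (by norm_num)⟩ = x := by
    ext; simp only [blockIdx]; omega
  simp only [hxe]
  ext
  simp only [letter, hx]
  rw [Nat.mul_add_div (by omega), Nat.div_eq_of_lt hb, add_zero]

lemma exists_isBlockPerm (hn : 0 < n) : ∃ π : Perm (Fin (3 * n)), IsBlockPerm π := by
  have hb : ∀ x : Fin (3 * n), x.val / 3 < n := fun x => by have := x.isLt; omega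
  have hlt : ∀ x : Fin (3 * n), n * (x.val % 3) + x.val / 3 < 3 * n := by
    intro x
    have h1 : x.val % 3 < 3 := Nat.mod_lt _ (by norm_num)
    have : n * (x.val % 3 + 1) ≤ n * 3 := Nat.mul_le_mul_left n h1
    have := hb x
    rw [mul_add] at *; omega
  let f : Fin (3 * n) → Fin (3 * n) := fun x => ⟨n * (x.val % 3) + x.val / 3, hlt x⟩
  have hf : Function.Injective f := by
    intro x y hxy
    have e : n * (x.val % 3) + x.val / 3 = n * (y.val % 3) + y.val / 3 := congrArg Fin.val hxy
    have e1 := congrArg (· % n) e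
    have e2 := congrArg (· / n) e
    simp only [Nat.mul_add_mod, Nat.mod_eq_of_lt (hb _)] at e1
    simp only [Nat.mul_add_div hn, Nat.div_eq_of_lt (hb _)] at e2
    ext; omega
  refine ⟨Equiv.ofBijective f (Finite.injective_iff_bijective.1 hf), fun x => ?_⟩
  simp only [Equiv.ofBijective_apply, f, Nat.mul_add_mod, Nat.mod_eq_of_lt (hb _)]

/-- A block permutation with largest orbit of `0` is transitive: otherwise some block would meet
this orbit without being contained in it, and the orbit could be enlarged by a transposition. -/
lemma exists_transitive (hn : 0 < n) :
    ∃ π : Perm (Fin (3 * n)), IsBlockPerm π ∧ IsTransitive π := by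
  classical
  let z : Fin (3 * n) := ⟨0, by omega⟩
  let s : Finset (Perm (Fin (3 * n))) := Finset.univ.filter IsBlockPerm
  have hs : s.Nonempty := by
    obtain ⟨π, h⟩ := exists_isBlockPerm hn
    exact ⟨π, by simp [s, h]⟩
  obtain ⟨π, hπs, hmax⟩ := s.exists_max_image
    (fun π => (Finset.univ.filter fun x => SameCycle π z x).card) hs
  have hπ : IsBlockPerm π := by simpa [s] using hπs
  refine ⟨π, hπ, ?_⟩
  have hblock : ∀ a b : Fin (3 * n), a.val / 3 = b.val / 3 → SameCycle π z a →
      SameCycle π z b := by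
    intro a b hab ha
    by_contra hb
    have hm : SameCycle (π * swap a b) a b := sameCycle_mul_swap fun h => hb (ha.trans h)
    have h1 := hmax (π * swap a b) (by simp [s, hπ.mul_swap hab])
    refine absurd h1 (not_le.2 (Finset.card_lt_card ?_))
    rw [Finset.ssubset_iff_of_subset]
    · exact ⟨b, by simpa using (SameCycle.of_mul_swap hm ha).trans hm, by simpa using hb⟩
    · intro x hx
      simp only [Finset.mem_filter, Finset.mem_univ, true_and] at hx ⊢
      exact SameCycle.of_mul_swap hm hx
  have key : ∀ (m : ℕ) (x : Fin (3 * n)), x.val = m → SameCycle π z x := by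
    intro m
    induction m using Nat.strong_induction_on with
    | _ m ih =>
      intro x hx
      by_cases h0 : x.val / 3 = 0
      · exact hblock z x (by simp [z, h0]) (SameCycle.refl _ _)
      -- The point `x / 3 < n` has its preimage in the block of `x`.
      have hxl := x.isLt
      let y : Fin (3 * n) := ⟨x.val / 3, by omega⟩
      have hy : SameCycle π z y := ih y.val (by simp only [y]; omega) y rfl
      have h1 := hπ (π.symm y)
      rw [Equiv.apply_symm_apply, Nat.mod_eq_of_lt (by simp only [y]; omega)] at h1
      refine hblock (π.symm y) x h1.symm ?_
      rw [← sameCycle_apply_right, Equiv.apply_symm_apply]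
      exact hy
  exact fun x y => (key _ x rfl).symm.trans (key _ y rfl)

/-- Any block of a transitive block permutation can be changed, at each of its three positions,
keeping transitivity. -/
lemma exists_shift_block {π : Perm (Fin (3 * n))} (hπ : IsBlockPerm π) (ht : IsTransitive π)
    {m : ℕ} (hm : m < n) :
    ∃ ρ : Perm (Fin (3 * n)), IsBlockPerm ρ ∧ IsTransitive ρ ∧
      (∀ x : Fin (3 * n), x.val / 3 ≠ m → ρ x = π x) ∧
      (∀ x : Fin (3 * n), x.val / 3 = m → letter ρ x ≠ letter π x) := by
  let a : Fin (3 * n) := ⟨3 * m, by omega⟩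
  let b : Fin (3 * n) := ⟨3 * m + 1, by omega⟩
  let c : Fin (3 * n) := ⟨3 * m + 2, by omega⟩
  have hab : a ≠ b := by simp [a, b]
  have hac : a ≠ c := by simp [a, c]
  have hbc : b ≠ c := by simp [b, c]
  have ha : a.val / 3 = m := by simp only [a]; omega
  have hb : b.val / 3 = m := by simp only [b]; omega
  have hc : c.val / 3 = m := by simp only [c]; omega
  have hcases : ∀ x : Fin (3 * n), x.val / 3 = m → x = a ∨ x = b ∨ x = c := by
    intro x hx
    simp only [a, b, c, Fin.ext_iff]
    omega
  have fin : ∀ ρ : Perm (Fin (3 * n)), IsBlockPerm ρ → IsTransitive ρ →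
      (∀ x, x ≠ a → x ≠ b → x ≠ c → ρ x = π x) → ρ a ≠ π a → ρ b ≠ π b → ρ c ≠ π c →
      ∃ ρ : Perm (Fin (3 * n)), IsBlockPerm ρ ∧ IsTransitive ρ ∧
        (∀ x : Fin (3 * n), x.val / 3 ≠ m → ρ x = π x) ∧
        (∀ x : Fin (3 * n), x.val / 3 = m → letter ρ x ≠ letter π x) := by
    intro ρ h1 h2 h3 h4 h5 h6
    refine ⟨ρ, h1, h2, fun x hx => h3 x ?_ ?_ ?_, fun x hx hl => ?_⟩
    · rintro rfl; exact hx ha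
    · rintro rfl; exact hx hb
    · rintro rfl; exact hx hc
    · have := apply_eq_of_letter_eq h1 hπ rfl hl
      rcases hcases x hx with rfl | rfl | rfl
      · exact h4 this
      · exact h5 this
      · exact h6 this
  have hπ1 := hπ.mul_swap (ha.trans hb.symm)
  rcases ht.transitive_or c hab with h | h
  · refine fin _ (hπ1.mul_swap (ha.trans hc.symm)) h ?_ ?_ ?_ ?_
    · intro x h1 h2 h3
      simp [swap_apply_of_ne_of_ne, h1, h2, h3]
    · simp [swap_apply_of_ne_of_ne, hac.symm, hbc.symm]
    · simp [swap_apply_of_ne_of_ne, hab.symm, hbc, hab]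
    · simp [hbc]
  · refine fin _ (hπ1.mul_swap (hb.trans hc.symm)) h ?_ ?_ ?_ ?_
    · intro x h1 h2 h3
      simp [swap_apply_of_ne_of_ne, h1, h2, h3]
    · simp [swap_apply_of_ne_of_ne, hab, hac, hab.symm]
    · simp [swap_apply_of_ne_of_ne, hac.symm, hbc.symm]
    · simp [hac]

/-- Removal of the coincidences between adjacent blocks among the last `m + 1` blocks, from right to
left. -/
lemma exists_no_ties_aux {π : Perm (Fin (3 * n))} (hπ : IsBlockPerm π) (ht : IsTransitive π)
    (m : ℕ) :
    ∃ ρ : Perm (Fin (3 * n)), IsBlockPerm ρ ∧ IsTransitive ρ ∧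
      (∀ x : Fin (3 * n), x.val / 3 = n - 1 → ρ x = π x) ∧
      (∀ x y : Fin (3 * n), y.val = x.val + 1 → x.val / 3 ≠ y.val / 3 → n ≤ y.val / 3 + m →
        letter ρ x ≠ letter ρ y) := by
  induction m with
  | zero =>
    refine ⟨π, hπ, ht, fun _ _ => rfl, fun x y _ _ h => ?_⟩
    have := y.isLt
    omega
  | succ m ih =>
    obtain ⟨ρ, h1, h2, h3, h4⟩ := ih
    by_cases hgood : ∀ x y : Fin (3 * n), y.val = x.val + 1 → x.val / 3 ≠ y.val / 3 →
        n ≤ y.val / 3 + (m + 1) → letter ρ x ≠ letter ρ y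
    · exact ⟨ρ, h1, h2, h3, hgood⟩
    push Not at hgood
    obtain ⟨x, y, hxy, hne, hle, heq⟩ := hgood
    have hx := x.isLt
    have hy := y.isLt
    obtain ⟨τ, t1, t2, t3, t4⟩ := exists_shift_block h1 h2 (m := x.val / 3) (by omega)
    have tl : ∀ v : Fin (3 * n), v.val / 3 ≠ x.val / 3 → letter τ v = letter ρ v := by
      intro v hv; simp only [letter, t3 v hv]
    -- The tie at `x`, `y` is the leftmost position under consideration.
    have hym : y.val / 3 + (m + 1) = n := by
      by_contra hcon
      exact h4 x y hxy hne (by omega) heq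
    refine ⟨τ, t1, t2, fun v hv => ?_, fun x' y' hxy' hne' hle' => ?_⟩
    · rw [t3 v (by omega), h3 v hv]
    · have hy' := y'.isLt
      by_cases hq : x'.val / 3 = x.val / 3
      · have hxx : x' = x := by ext; omega
        have hyy : y' = y := by ext; omega
        subst hxx hyy
        rw [tl y' (by omega), ← heq]
        exact t4 x' rfl
      · rw [tl x' hq, tl y' (by omega)]
        exact h4 x' y' hxy' hne' (by omega)

lemma exists_no_ties {π : Perm (Fin (3 * n))} (hπ : IsBlockPerm π) (ht : IsTransitive π) :
    ∃ ρ : Perm (Fin (3 * n)), IsBlockPerm ρ ∧ IsTransitive ρ ∧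
      (∀ x : Fin (3 * n), x.val / 3 = n - 1 → letter ρ x = letter π x) ∧
      Unclustered (letter ρ) := by
  obtain ⟨ρ, h1, h2, h3, h4⟩ := exists_no_ties_aux hπ ht n
  refine ⟨ρ, h1, h2, fun x hx => by simp only [letter, h3 x hx], fun i hi => ?_⟩
  by_cases hb : i / 3 = (i + 1) / 3
  · intro hl
    have := ρ.injective (apply_eq_of_letter_eq h1 h1 hb hl)
    simp at this
  · exact h4 _ _ rfl hb (by omega)

/-- The last position of a transitive block permutation does not carry the letter `2`. -/
lemma letter_last_ne {π : Perm (Fin (3 * n))} (hπ : IsBlockPerm π) (ht : IsTransitive π)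
    (x : Fin (3 * n)) (hx : x.val = 3 * n - 1) : letter π x ≠ 2 := by
  intro hl
  have hxl := x.isLt
  have h1 : (π x).val / n = 2 := congrArg Fin.val hl
  have h2 := hπ x
  have h3 := Nat.div_add_mod (π x).val n
  have hz : (⟨0, by omega⟩ : Fin (3 * n)) ≠ ⟨1, by omega⟩ := by simp
  refine ht.apply_ne hz x ?_
  ext
  rw [h1, h2] at h3
  omega

lemma exists_letter_eq_two {π : Perm (Fin (3 * n))} (hn : 0 < n) (hπ : IsBlockPerm π)
    (ht : IsTransitive π) (x y : Fin (3 * n)) (hx : x.val = 3 * n - 3) (hy : y.val = 3 * n - 2) :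
    letter π x = 2 ∨ letter π y = 2 := by
  obtain ⟨i, hi⟩ := isAlphaPermPower_letter π hπ ⟨n - 1, by omega⟩ 2
  have hi3 := i.isLt
  have h2 : i.val ≠ 2 := by
    intro h
    exact letter_last_ne hπ ht _ (by simp only [blockIdx]; omega) hi
  rcases (by omega : i.val = 0 ∨ i.val = 1) with h | h
  · left; rw [← hi]; congr 1; ext; simp only [blockIdx]; omega
  · right; rw [← hi]; congr 1; ext; simp only [blockIdx]; omega

end Blocks

/-! ### Inverting the Burrows–Wheeler transform -/

section Inversion

open Equiv Equiv.Perm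

lemma lexLe_iff {n k : ℕ} (f g : Fin n → Fin k) : LexLe f g ↔ toLex f ≤ toLex g := by
  rw [le_iff_eq_or_lt]
  exact Iff.rfl

lemma sortedRot_pairwise {n k : ℕ} (w : Fin n → Fin k) :
    (sortedRot w).Pairwise fun a b => LexLe (rotl w a) (rotl w b) := by
  have := List.pairwise_mergeSort (le := fun a b => decide (LexLe (rotl w a) (rotl w b)))
    (fun a b c => by simp only [decide_eq_true_eq, lexLe_iff]; exact le_trans)
    (fun a b => by
      simp only [Bool.or_eq_true, decide_eq_true_eq, lexLe_iff]; exact le_total _ _)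
    (List.finRange n)
  simpa [sortedRot] using this

/-- The word of a transitive block permutation is a Burrows–Wheeler transform. -/
lemma exists_bwt_eq {n : ℕ} (hn : 0 < n) {π : Perm (Fin (3 * n))} (hπ : IsBlockPerm π)
    (ht : IsTransitive π) : ∃ u : Fin (3 * n) → Fin 3, bwt u = letter π := by
  let z : Fin (3 * n) := ⟨0, by omega⟩
  have hc : (π⁻¹).IsCycleOn ((Finset.univ : Finset (Fin (3 * n))) : Set (Fin (3 * n))) := by
    rw [Finset.coe_univ]; exact ht.isCycleOn.inv
  have hcard : (Finset.univ : Finset (Fin (3 * n))).card = 3 * n := by simp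
  have hmod : ∀ (i j : ℕ) (x : Fin (3 * n)), i ≡ j [MOD 3 * n] → (π⁻¹ ^ i) x = (π⁻¹ ^ j) x := by
    intro i j x hij
    rw [hc.pow_apply_eq_pow_apply (Finset.mem_univ _), hcard]; exact hij
  -- `p j` is the row of the rotation starting at `j`, and `F x` the first letter of row `x`.
  let p : Fin (3 * n) → Fin (3 * n) := fun j => (π⁻¹ ^ j.val) z
  let F : Fin (3 * n) → Fin 3 := fun x =>
    ⟨x.val / n, Nat.div_lt_of_lt_mul (by have := x.isLt; omega)⟩
  let u : Fin (3 * n) → Fin 3 := fun j => F (p j)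
  have hp : Function.Injective p := by
    intro i j hij
    have := (hc.pow_apply_eq_pow_apply (Finset.mem_univ _)).1 hij
    rw [hcard] at this
    ext
    exact this.eq_of_lt_of_lt i.isLt j.isLt
  have hrot : ∀ i j, rotl u j i = F ((π⁻¹ ^ i.val) (p j)) := by
    intro i j
    simp only [rotl, u, p]
    rw [← Perm.mul_apply, ← pow_add, Fin.val_add]
    rw [hmod _ _ z (Nat.mod_modEq _ _)]
  have hmono : ∀ x y, x ≤ y → F x ≤ F y := fun x y h => by
    simp only [F, Fin.mk_le_mk]; exact Nat.div_le_div_right h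
  have hstep : ∀ x y, x < y → F x = F y → π⁻¹ x < π⁻¹ y := by
    intro x y hxy hF
    have h1 := hπ (π⁻¹ x)
    have h2 := hπ (π⁻¹ y)
    rw [show π (π⁻¹ x) = x from π.apply_symm_apply x] at h1
    rw [show π (π⁻¹ y) = y from π.apply_symm_apply y] at h2
    have hF' : x.val / n = y.val / n := congrArg Fin.val hF
    have e1 := Nat.div_add_mod x.val n
    have e2 := Nat.div_add_mod y.val n
    rw [hF'] at e1
    have hxy' : x.val < y.val := hxy
    rw [Fin.lt_def]
    omega
  have hiter : ∀ x y, x < y → ∀ i : ℕ,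
      (∀ j < i, F ((π⁻¹ ^ j) x) = F ((π⁻¹ ^ j) y)) → (π⁻¹ ^ i) x < (π⁻¹ ^ i) y := by
    intro x y hxy i
    induction i with
    | zero => intro _; simpa using hxy
    | succ i ih =>
      intro h
      rw [pow_succ', Perm.mul_apply, Perm.mul_apply]
      exact hstep _ _ (ih fun j hj => h j (by omega)) (h i (by omega))
  have hlex : ∀ a b, p a < p b → toLex (rotl u a) < toLex (rotl u b) := by
    intro a b hab
    -- The rows differ somewhere: otherwise `0`, being some `π⁻ⁱ (p b)`, would not be least.
    have hdiff : ∃ i : ℕ, F ((π⁻¹ ^ i) (p a)) ≠ F ((π⁻¹ ^ i) (p b)) := by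
      by_contra hcon
      push Not at hcon
      obtain ⟨i, -, hi⟩ := hc.exists_pow_eq (Finset.mem_univ (p b)) (Finset.mem_univ z)
      have := hiter _ _ hab i fun j _ => hcon j
      rw [hi, Fin.lt_def] at this
      exact absurd this (Nat.not_lt_zero _)
    classical
    have hmin := fun j (hj : j < Nat.find hdiff) => not_not.1 (Nat.find_min hdiff hj)
    have hspec := Nat.find_spec hdiff
    have hlt : Nat.find hdiff < 3 * n := by
      by_contra hcon
      have hr : Nat.find hdiff % (3 * n) < 3 * n := Nat.mod_lt _ (by omega)
      have h1 := hmin (Nat.find hdiff % (3 * n)) (by omega)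
      rw [hmod _ _ _ (Nat.mod_modEq _ _), hmod _ _ (p b) (Nat.mod_modEq _ _)] at h1
      exact hspec h1
    refine ⟨⟨Nat.find hdiff, hlt⟩, fun j hj => ?_, ?_⟩
    · change rotl u a j = rotl u b j
      rw [hrot, hrot]
      exact hmin j.val hj
    · change rotl u a _ < rotl u b _
      rw [hrot, hrot]
      exact lt_of_le_of_ne (hmono _ _ (hiter _ _ hab _ hmin).le) hspec
  have hsorted : ((sortedRot u).map p).Pairwise (· ≤ ·) := by
    rw [List.pairwise_map]
    refine (sortedRot_pairwise u).imp fun {a b} h => ?_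
    by_contra hcon
    exact absurd ((lexLe_iff _ _).1 h) (not_le.2 (hlex b a (not_le.1 hcon)))
  have hperm : ((sortedRot u).map p).Perm (List.finRange (3 * n)) := by
    have h1 : ((sortedRot u).map p).Perm ((List.finRange (3 * n)).map p) :=
      (List.mergeSort_perm _ _).map p
    refine h1.trans ?_
    rw [List.perm_ext_iff_of_nodup ((List.nodup_finRange _).map hp) (List.nodup_finRange _)]
    intro x
    have := (Finite.injective_iff_surjective.1 hp) x
    simpa using this
  have hlist : (sortedRot u).map p = List.finRange (3 * n) :=
    hperm.eq_of_pairwise' hsorted (List.pairwise_le_finRange _)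
  refine ⟨u, funext fun m => ?_⟩
  have hm : m.val < (sortedRot u).length := by rw [length_sortedRot]; exact m.isLt
  have hpm : p ((sortedRot u)[m.val]) = m := by
    have : ((sortedRot u).map p)[m.val]'(by simpa using hm) = m := by
      simp [hlist]
    simpa using this
  have hprev : ∀ (j : Fin (3 * n)) (h : (j.val + (3 * n - 1)) % (3 * n) < 3 * n),
      p ⟨(j.val + (3 * n - 1)) % (3 * n), h⟩ = π (p j) := by
    intro j h
    simp only [p]
    rw [hmod _ _ z (Nat.mod_modEq _ _)]
    -- Both sides agree after applying `π⁻¹`, as `π⁻¹` has order `3 * n`.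
    apply (π⁻¹).injective
    rw [show π⁻¹ (π ((π⁻¹ ^ j.val) z)) = (π⁻¹ ^ j.val) z from π.symm_apply_apply _,
      ← Perm.mul_apply, ← pow_succ']
    apply hmod
    rw [add_assoc, Nat.sub_add_cancel (by omega)]
    exact Nat.add_modEq_right
  change F (p _) = F (π m)
  rw [hprev, hpm]

end Inversion

theorem stmt10 (n : ℕ) (hn : 0 < n) :
    (∃ u : Fin (3 * n) → Fin 3, IsAlphaPermPower (bwt u) ∧ Unclustered (bwt u) ∧
      bwt u ⟨3 * n - 3, by omega⟩ = 2) ∧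
    (∃ u : Fin (3 * n) → Fin 3, IsAlphaPermPower (bwt u) ∧ Unclustered (bwt u) ∧
      bwt u ⟨3 * n - 2, by omega⟩ = 2) := by
  have main : ∀ x : Fin (3 * n), x.val / 3 = n - 1 →
      (∃ π : Equiv.Perm (Fin (3 * n)), IsBlockPerm π ∧ IsTransitive π ∧ letter π x = 2) →
      ∃ u : Fin (3 * n) → Fin 3, IsAlphaPermPower (bwt u) ∧ Unclustered (bwt u) ∧
        bwt u x = 2 := by
    rintro x hx ⟨π, h1, h2, h3⟩
    obtain ⟨ρ, r1, r2, r3, r4⟩ := exists_no_ties h1 h2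
    obtain ⟨u, hu⟩ := exists_bwt_eq hn r1 r2
    refine ⟨u, ?_, ?_, ?_⟩ <;> rw [hu]
    · exact isAlphaPermPower_letter ρ r1
    · exact r4
    · rw [r3 x hx, h3]
  obtain ⟨π, h1, h2⟩ := exists_transitive hn
  obtain ⟨ρ, r1, r2, -, r4⟩ := exists_shift_block h1 h2 (m := n - 1) (by omega)
  -- The letter `2` is at one of the two positions for `π`, and at the other one for `ρ`.
  constructor
  · refine main _ (by simp only; omega) ?_
    rcases exists_letter_eq_two hn h1 h2 ⟨3 * n - 3, by omega⟩
        ⟨3 * n - 2, by omega⟩ rfl rfl with h | h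
    · exact ⟨π, h1, h2, h⟩
    · exact ⟨ρ, r1, r2, (exists_letter_eq_two hn r1 r2 ⟨3 * n - 3, by omega⟩
        ⟨3 * n - 2, by omega⟩ rfl rfl).resolve_right fun h' =>
        r4 _ (by simp only; omega) (h'.trans h.symm)⟩
  · refine main _ (by simp only; omega) ?_
    rcases exists_letter_eq_two hn h1 h2 ⟨3 * n - 3, by omega⟩
        ⟨3 * n - 2, by omega⟩ rfl rfl with h | h
    · exact ⟨ρ, r1, r2, (exists_letter_eq_two hn r1 r2 ⟨3 * n - 3, by omega⟩
        ⟨3 * n - 2, by omega⟩ rfl rfl).resolve_left fun h' =>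
        r4 _ (by simp only; omega) (h'.trans h.symm)⟩
    · exact ⟨π, h1, h2, h⟩
end

section
/- For every integer n ≥ 1, the number of polynomials f over the field GF(3) with deg f < n that are coprime with X^n − 1 is at least 2^n; that is, Φ_3(n) ≥ 2^n, where Φ_3 is the generalized Euler totient function over GF(3). -/
open Polynomial

/-- Among the lifts `f + R * h` with `deg h < deg P` of a residue `f` coprime to `R`, at most one
is divisible by the irreducible `P`. -/
lemma lift_unique_of_dvd {F : Type*} [Field F] {P R f h h' : F[X]} (hP : Irreducible P)
    (hf : IsCoprime f R) (hh : h.degree < P.degree) (hh' : h'.degree < P.degree)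
    (h1 : P ∣ f + R * h) (h2 : P ∣ f + R * h') : h = h' := by
  have hR : ¬ P ∣ R := fun hPR =>
    hP.not_isUnit (hf.isUnit_of_dvd' ((dvd_add_left (hPR.mul_right h)).1 h1) hPR)
  have h3 : P ∣ R * (h - h') := by
    have := dvd_sub h1 h2
    rwa [show f + R * h - (f + R * h') = R * (h - h') by ring] at this
  have h4 : P ∣ h - h' := (hP.prime.dvd_or_dvd h3).resolve_left hR
  exact sub_eq_zero.1 (eq_zero_of_dvd_of_degree_lt h4
    ((degree_sub_le _ _).trans_lt (max_lt hh hh')))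

/-- There are `3 ^ d` polynomials of degree `< d` over `GF(3)`. -/
lemma ncard_degree_lt (d : ℕ) :
    {h : (ZMod 3)[X] | h.degree < (d : ℕ)}.ncard = 3 ^ d := by
  have e := Nat.card_congr (degreeLTEquiv (ZMod 3) d).toEquiv
  have hs : {h : (ZMod 3)[X] | h.degree < (d : ℕ)} = (degreeLT (ZMod 3) d : Set (ZMod 3)[X]) := by
    ext h
    simp [mem_degreeLT]
  rw [hs, ← Nat.card_coe_set_eq]
  simpa using e

lemma finite_degree_lt (d : ℕ) : {h : (ZMod 3)[X] | h.degree < (d : ℕ)}.Finite :=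
  Set.finite_of_ncard_ne_zero (by rw [ncard_degree_lt]; positivity)

/-- Each residue `f` coprime to `R` has at least `2 ^ deg P` lifts modulo `P * R` that are coprime
to `P`: all but at most one of the `3 ^ deg P` lifts are, and `2 ^ d ≤ 3 ^ d - 1` for `d ≥ 1`. The
lifts are returned as an injective family of the multipliers `h` in `f + R * h`. -/
lemma exists_good_lifts {P R f : (ZMod 3)[X]} (hP : Irreducible P) (hf : IsCoprime f R) :
    ∃ φ : Fin (2 ^ P.natDegree) → (ZMod 3)[X], Function.Injective φ ∧
      ∀ i, (φ i).degree < P.degree ∧ IsCoprime (f + R * φ i) P := by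
  set d := P.natDegree with hd
  have hdeg : P.degree = (d : ℕ) := degree_eq_natDegree hP.ne_zero
  have hd0 : 0 < d := hP.natDegree_pos
  set T := {h : (ZMod 3)[X] | h.degree < (d : ℕ)} with hT
  set B := {h : (ZMod 3)[X] | h.degree < (d : ℕ) ∧ P ∣ f + R * h} with hB
  have hB1 : B.ncard ≤ 1 := by
    refine (Set.ncard_le_one ((finite_degree_lt d).subset fun h hh => hh.1)).2 ?_
    rintro a ⟨ha, ha'⟩ b ⟨hb, hb'⟩
    exact lift_unique_of_dvd hP hf (hdeg ▸ ha) (hdeg ▸ hb) ha' hb'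
  have hfin : (T \ B).Finite := (finite_degree_lt d).sdiff
  have hcard : 2 ^ d ≤ (T \ B).ncard := by
    have h1 : T.ncard ≤ (T \ B).ncard + B.ncard :=
      Set.ncard_le_ncard_sdiff_add_ncard T B ((finite_degree_lt d).subset fun h hh => hh.1)
    have h2 : 2 ^ d < 3 ^ d := Nat.pow_lt_pow_left (by norm_num) hd0.ne'
    rw [hT, ncard_degree_lt] at h1
    rw [hT]
    omega
  have : Finite ↥(T \ B) := hfin
  have := Fintype.ofFinite ↥(T \ B)
  obtain ⟨e⟩ : Nonempty (Fin (2 ^ d) ↪ ↥(T \ B)) := by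
    rw [Function.Embedding.nonempty_iff_card_le, Fintype.card_fin, ← Nat.card_eq_fintype_card]
    exact hcard
  refine ⟨fun i => (e i : (ZMod 3)[X]), Subtype.val_injective.comp e.injective, fun i => ?_⟩
  obtain ⟨h1, h2⟩ := (e i).2
  refine ⟨hdeg ▸ h1, IsCoprime.symm ?_⟩
  exact (hP.coprime_iff_not_dvd).2 fun h => h2 ⟨h1, h⟩

/-- At least `2 ^ deg Q` residues modulo a nonzero `Q` are coprime to `Q`. -/
lemma two_pow_le_ncard_coprime (Q : (ZMod 3)[X]) (hQ : Q ≠ 0) :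
    2 ^ Q.natDegree ≤ {f : (ZMod 3)[X] | f.degree < Q.degree ∧ IsCoprime f Q}.ncard := by
  induction Q using WfDvdMonoid.induction_on_irreducible with
  | zero => exact absurd rfl hQ
  | unit u hu =>
    have hs : {f : (ZMod 3)[X] | f.degree < u.degree ∧ IsCoprime f u} = {0} := by
      ext f
      have hc : IsCoprime f u := by
        obtain ⟨b, hb⟩ := hu.exists_left_inv
        exact ⟨0, b, by simp [hb]⟩
      simp [degree_eq_zero_of_isUnit hu, hc]
    rw [hs, natDegree_eq_zero_of_isUnit hu]
    simp
  | mul R P hR hP ih =>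
    specialize ih hR
    set S := {f : (ZMod 3)[X] | f.degree < R.degree ∧ IsCoprime f R} with hS
    choose φ hinj hφ using fun f : S => exists_good_lifts hP f.2.2
    set S' := {f : (ZMod 3)[X] | f.degree < (P * R).degree ∧ IsCoprime f (P * R)} with hS'
    have hfin' : Finite S' := by
      refine Set.Finite.subset (finite_degree_lt (P * R).natDegree) fun f hf => ?_
      have := hf.1
      rwa [degree_eq_natDegree hQ] at this
    have hmem (x : S × Fin (2 ^ P.natDegree)) : (x.1 : (ZMod 3)[X]) + R * φ x.1 x.2 ∈ S' := by
      obtain ⟨⟨f, hf1, hf2⟩, i⟩ := x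
      obtain ⟨h1, h2⟩ := hφ ⟨f, hf1, hf2⟩ i
      refine ⟨?_, h2.mul_right (hf2.add_mul_left_left _)⟩
      refine (degree_add_le _ _).trans_lt (max_lt ?_ ?_)
      · refine hf1.trans_le ?_
        rw [mul_comm]
        exact degree_le_mul_left R hP.ne_zero
      · rw [mul_comm R, degree_mul, degree_mul]
        exact WithBot.add_lt_add_right (degree_ne_bot.2 hR) h1
    have hinj' : Function.Injective fun x => (⟨_, hmem x⟩ : S') := by
      rintro ⟨f, i⟩ ⟨g, j⟩ h
      have h : (f : (ZMod 3)[X]) + R * φ f i = g + R * φ g j := congrArg Subtype.val h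
      have hfg : f = g := by
        refine Subtype.ext (sub_eq_zero.1 (eq_zero_of_dvd_of_degree_lt (p := R) ?_
          ((degree_sub_le _ _).trans_lt (max_lt f.2.1 g.2.1))))
        exact ⟨φ g j - φ f i, by linear_combination h⟩
      subst hfg
      rw [hinj f (mul_left_cancel₀ hR (add_left_cancel h))]
    have hle := Nat.card_le_card_of_injective _ hinj'
    rw [Nat.card_prod, Nat.card_coe_set_eq, Nat.card_coe_set_eq, Nat.card_fin] at hle
    calc 2 ^ (P * R).natDegree = 2 ^ R.natDegree * 2 ^ P.natDegree := by
          rw [natDegree_mul hP.ne_zero hR, pow_add, mul_comm]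
      _ ≤ S.ncard * 2 ^ P.natDegree := Nat.mul_le_mul_right _ ih
      _ ≤ S'.ncard := hle

theorem stmt13 (n : ℕ) (hn : 1 ≤ n) :
    2 ^ n ≤ Set.ncard {f : Polynomial (ZMod 3) |
      f.degree < (n : ℕ) ∧ IsCoprime f (Polynomial.X ^ n - 1)} := by
  have h1 : (X ^ n - 1 : (ZMod 3)[X]) ≠ 0 := by
    simpa using X_pow_sub_C_ne_zero hn (1 : ZMod 3)
  have h2 : (X ^ n - 1 : (ZMod 3)[X]).degree = (n : ℕ) := by
    simpa using degree_X_pow_sub_C hn (1 : ZMod 3)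
  have h3 := two_pow_le_ncard_coprime _ h1
  rwa [natDegree_eq_of_degree_eq_some h2, h2] at h3
end
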